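/- Let V be a finite-dimensional complex symplectic vector space and Γ ⊆ Sp(V) a finite subgroup. The natural group homomorphism from the normalizer N_{Sp(V)}(Γ) to the group of automorphisms of ℂ[V]^Γ that preserve the grading and the Poisson bracket, sending g to the automorphism f ↦ f ∘ g^{-1}, is surjective and has kernel exactly Γ. Consequently, the automorphism group of the graded Poisson algebra ℂ[V]^Γ is isomorphic to N_{Sp(V)}(Γ)/Γ. -/

import Mathlib

/-!
A graded Poisson automorphism `ψ` of `ℂ[V]^Γ` lifts to an embedding `φ` of `ℂ[V]` into an algebraic
closure `K` of `ℂ(V)`, since `ℂ[V]` is integral over the invariants. Both `φ` and the inclusion make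
`K` an algebraic extension of `ℂ(V)`, so each `∂_j` extends uniquely to `K`, and the two notions of
integrality agree. No element of `Γ` other than `1` fixes a hyperplane (a symplectic matrix has
determinant `1`), so `Γ` acts with trivial inertia in codimension one; there the differentials of
invariants generate all differentials, and by purity every `∂_j (φ x_l)` is integral over `ℂ[V]`.
As `ψ` preserves degrees, `φ` commutes with the Euler derivation, which therefore kills
`∂_j (φ x_l)`; an integral element of degree `0` is a constant. Hence `φ` is linear on the
generators: it is a substitution `f ↦ f ∘ g⁻¹`. A constant bivector is determined by the brackets
of invariants, so `g` is symplectic.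
-/

set_option synthInstance.maxHeartbeats 1000000
set_option maxHeartbeats 1000000
open MvPolynomial

/-- `ℂ[V]` for `V = ℂ^{2n}` in Darboux coordinates indexed by `Fin n ⊕ Fin n`. -/
abbrev Pn (n : ℕ) : Type := MvPolynomial (Fin n ⊕ Fin n) ℂ

/-- `V = ℂ^{2n}`. -/
abbrev Vn (n : ℕ) : Type := (Fin n ⊕ Fin n) → ℂ

/-- matrices acting on `V`. -/
abbrev Mn (n : ℕ) : Type := Matrix (Fin n ⊕ Fin n) (Fin n ⊕ Fin n) ℂ

/-- the general linear group of `V`. -/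
abbrev GLn (n : ℕ) := Matrix.GeneralLinearGroup (Fin n ⊕ Fin n) ℂ

/-- The standard Poisson bracket on `ℂ[V]`:
`{f,g} = Σ_i (∂f/∂x_i ∂g/∂y_i − ∂f/∂y_i ∂g/∂x_i)`. -/
noncomputable def pbracket (n : ℕ) (f g : Pn n) : Pn n :=
  ∑ i : Fin n,
    (pderiv (Sum.inl i) f * pderiv (Sum.inr i) g -
      pderiv (Sum.inr i) f * pderiv (Sum.inl i) g)

/-- Substitution of a linear change of variables: `substG n A f = f ∘ A` as polynomial
functions, i.e. `X j ↦ Σ_k A j k • X k`. -/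
noncomputable def substG (n : ℕ) (A : Mn n) : Pn n →ₐ[ℂ] Pn n :=
  aeval fun j => ∑ k, A j k • X k

/-- The invariants `ℂ[V]^Γ` of a subgroup `Γ ⊆ GL(V)`. -/
noncomputable def invariants (n : ℕ) (Γ : Subgroup (GLn n)) : Subalgebra ℂ (Pn n) where
  carrier := {f | ∀ γ ∈ Γ, substG n ((γ : GLn n) : Mn n) f = f}
  mul_mem' := fun {a b} ha hb γ hγ => by rw [map_mul, ha γ hγ, hb γ hγ]
  one_mem' := fun γ hγ => map_one _
  add_mem' := fun {a b} ha hb γ hγ => by rw [map_add, ha γ hγ, hb γ hγ]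
  zero_mem' := fun γ hγ => map_zero _
  algebraMap_mem' := fun c γ hγ => (substG n ((γ : GLn n) : Mn n)).commutes c

section Derivations

variable {k R S M : Type*} [CommRing k] [CommRing R] [CommRing S] [Algebra k S]
  [Algebra R S] [AddCommGroup M] [Module k M] [Module R M] [Module S M]

theorem exists_derivation_of_map_algebraMap_eq_zero [IsScalarTower R S M]
    (D : Derivation k S M) (hD : ∀ r, D (algebraMap R S r) = 0) :
    ∃ D' : Derivation R S M, ⇑D' = D := by
  refine ⟨Derivation.mk' { D.toLinearMap with map_smul' := fun r s ↦ ?_ } D.leibniz, rfl⟩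
  simp [Algebra.smul_def r s, hD]

theorem derivation_eq_zero_of_isAlgebraic [CharZero S] [IsDomain S] [FaithfulSMul R S]
    [Algebra.IsAlgebraic R S] [Module.IsTorsionFree S M] (D : Derivation R S M) : D = 0 := by
  ext s
  obtain ⟨p, ⟨hp, hps⟩, hmin⟩ := exists_minimalFor_of_wellFoundedLT
    (fun p : Polynomial R ↦ p ≠ 0 ∧ Polynomial.aeval s p = 0) Polynomial.natDegree
    (Algebra.IsAlgebraic.isAlgebraic s)
  have : CharZero R :=
    ((algebraMap R S).charZero_iff (FaithfulSMul.algebraMap_injective R S)).mpr inferInstance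
  have : IsDomain R := (FaithfulSMul.algebraMap_injective R S).isDomain
  have hdeg : p.natDegree ≠ 0 := fun h ↦ by
    obtain ⟨c, rfl⟩ := Polynomial.natDegree_eq_zero.mp h
    simp_all
  have hderiv : Polynomial.aeval s p.derivative ≠ 0 := fun h ↦
    (Polynomial.natDegree_derivative_lt hdeg).not_ge <|
      hmin ⟨mt Polynomial.derivative_eq_zero.mp hdeg, h⟩
        (Polynomial.natDegree_derivative_lt hdeg).le
  have hchain := D.map_aeval p s
  rw [hps, map_zero, eq_comm] at hchain
  exact (smul_eq_zero.mp hchain).resolve_left hderiv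

theorem derivation_ext_of_isAlgebraic [IsScalarTower R S M] [CharZero S] [IsDomain S]
    [FaithfulSMul R S] [Algebra.IsAlgebraic R S] [Module.IsTorsionFree S M]
    {D₁ D₂ : Derivation k S M} (h : ∀ r, D₁ (algebraMap R S r) = D₂ (algebraMap R S r)) :
    D₁ = D₂ := by
  obtain ⟨D, hD⟩ := exists_derivation_of_map_algebraMap_eq_zero (D₁ - D₂) (R := R)
    fun r ↦ sub_eq_zero.mpr (h r)
  refine sub_eq_zero.mp (DFunLike.coe_injective ?_)
  rw [← hD, derivation_eq_zero_of_isAlgebraic D]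
  rfl

end Derivations

section Extension

variable {k B K : Type*} [CommRing k] [CommRing B] [IsDomain B] [Algebra k B] [Field K]
  [CharZero K] [Algebra k K] [Algebra B K] [IsScalarTower k B K] [FaithfulSMul B K]
  [Algebra.IsAlgebraic B K]

variable (B K) in
theorem formallyEtale_of_isAlgebraic : Algebra.FormallyEtale B K := by
  let F := FractionRing B
  let : Algebra F K := FractionRing.liftAlgebra B K
  have : IsScalarTower B F K := FractionRing.isScalarTower_liftAlgebra B K
  have : CharZero F := (algebraMap F K).charZero
  have : Algebra.IsAlgebraic F K := (IsFractionRing.comap_isAlgebraic_iff (A := B)).mp inferInstance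
  have : Algebra.FormallyEtale B F := .of_isLocalization (nonZeroDivisors B)
  have : Algebra.FormallyEtale F K := .of_isSeparable F K
  exact .comp B F K

theorem exists_derivation_extension (d : Derivation k B K) :
    ∃ D : Derivation k K K, ∀ b, D (algebraMap B K b) = d b := by
  have := formallyEtale_of_isAlgebraic B K
  let e := KaehlerDifferential.tensorKaehlerEquivOfFormallyEtale k B K
  refine ⟨(d.liftKaehlerDifferential.liftBaseChange K ∘ₗ e.symm.toLinearMap).compDer
    (KaehlerDifferential.D k K), fun b ↦ ?_⟩
  simp [e, KaehlerDifferential.tensorKaehlerEquivOfFormallyEtale_symm_D_algebraMap]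

end Extension

section DifferentKillsDerivations

theorem prod_sub_smul_derivation_eq_zero {A B G M : Type*} [CommRing A] [CommRing B] [Algebra A B]
    [Group G] [Fintype G] [DecidableEq G] [MulSemiringAction G B] [Algebra.IsInvariant A B G]
    [AddCommGroup M] [Module A M] [Module B M] (D : Derivation A B M) (b : B) :
    (∏ g ∈ Finset.univ.erase (1 : G), (b - g • b)) • D b = 0 := by
  obtain ⟨p, hp⟩ := Algebra.IsInvariant.charpoly_mem_lifts A B G b
  have hp : p.map (algebraMap A B) = MulSemiringAction.charpoly G b := hp
  have hroot : Polynomial.aeval b p = 0 := by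
    rw [Polynomial.aeval_def, ← Polynomial.eval_map, hp, MulSemiringAction.eval_charpoly]
  have hderiv : Polynomial.aeval b p.derivative
      = ∏ g ∈ Finset.univ.erase (1 : G), (b - g • b) := by
    rw [Polynomial.aeval_def, ← Polynomial.eval_map, ← Polynomial.derivative_map, hp,
      MulSemiringAction.charpoly_eq, ← Finset.mul_prod_erase _ _ (Finset.mem_univ (1 : G))]
    simp [Polynomial.eval_prod]
  rw [← hderiv, ← D.map_aeval, hroot, map_zero]

end DifferentKillsDerivations

section Constants

open scoped Differential

variable {B K : Type*} [CommRing B] [IsDomain B] [IsIntegrallyClosed B] [Differential B]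
  [CommRing K] [IsDomain K] [Differential K] [Algebra B K] [Module.IsTorsionFree B K]
  [DifferentialAlgebra B K]

theorem deriv_coeff_minpoly_eq_zero {u : K} (hu : IsIntegral B u) (hu' : u′ = 0) (n : ℕ) :
    ((minpoly B u).coeff n)′ = 0 := by
  set p := minpoly B u with hp
  have hroot : Polynomial.aeval u (Differential.mapCoeffs p) = 0 := by
    simpa [hu', hp] using (Differential.deriv_aeval_eq u p).symm
  have hdeg : (Differential.mapCoeffs p).degree < p.degree := by
    rw [Polynomial.degree_eq_natDegree (minpoly.ne_zero hu), Polynomial.degree_lt_iff_coeff_zero]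
    intro m hm
    rw [Differential.coeff_mapCoeffs]
    rcases hm.eq_or_lt with rfl | hm
    · rw [(minpoly.monic hu).coeff_natDegree, Derivation.map_one_eq_zero]
    · rw [Polynomial.coeff_eq_zero_of_natDegree_lt hm, map_zero]
  have hzero : Differential.mapCoeffs p = 0 := by
    by_contra h
    exact hdeg.not_ge (minpoly.IsIntegrallyClosed.degree_le_of_ne_zero h hroot)
  rw [← Differential.coeff_mapCoeffs, hzero, Polynomial.coeff_zero]

end Constants

section Fractions

variable {B : Type*} [CommRing B] [IsDomain B]

theorem isInteger_of_forall_isPrincipal [UniqueFactorizationMonoid B] {F : Type*} [Field F]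
    [Algebra B F] [IsFractionRing B F] {c : F}
    (h : ∀ p : Ideal B, p.IsPrime → p.IsPrincipal →
      ∃ J ∉ p, IsLocalization.IsInteger B (J • c)) : IsLocalization.IsInteger B c := by
  by_contra hc
  obtain ⟨π, hπ, hπd⟩ := WfDvdMonoid.exists_irreducible_factor
    (mt IsFractionRing.isInteger_of_isUnit_den hc)
    (nonZeroDivisors.ne_zero (IsFractionRing.den B c).2)
  obtain ⟨J, hJ, b, hb⟩ := h (Ideal.span {π})
    ((Ideal.span_singleton_prime hπ.ne_zero).mpr hπ.prime) ⟨π, rfl⟩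
  rw [Ideal.mem_span_singleton] at hJ
  have hnum : b * (IsFractionRing.den B c : B) = J * IsFractionRing.num B c := by
    apply IsFractionRing.injective B F
    rw [map_mul, hb, map_mul, Algebra.smul_def, mul_assoc,
      IsFractionRing.num_mul_den_eq_num_iff_eq.mpr rfl]
  rcases hπ.prime.dvd_or_dvd (hnum ▸ hπd.mul_left b) with hπJ | hπn
  · exact hJ hπJ
  · exact hπ.not_isUnit (IsFractionRing.num_den_reduced B c hπn hπd)

variable {F K : Type*} [Field F] [Algebra B F] [IsFractionRing B F] [Field K] [Algebra B K]
  [Algebra F K] [IsScalarTower B F K]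

theorem isInteger_pow_smul_coeff_minpoly [IsIntegrallyClosed B] {u : K} (hu : IsIntegral F u)
    {J : B} (hJ : J ≠ 0) (hJu : IsIntegral B (J • u)) (n : ℕ) :
    IsLocalization.IsInteger B
      (J ^ ((minpoly F u).natDegree - n) • (minpoly F u).coeff n) := by
  have hscale : minpoly F (J • u) = (minpoly F u).scaleRoots (algebraMap B F J) := by
    rw [← IsIntegrallyClosed.minpoly_smul _ hu, algebraMap_smul]
    simpa using hJ
  refine ⟨(minpoly B (J • u)).coeff n, ?_⟩
  rw [← Polynomial.coeff_map, ← minpoly.isIntegrallyClosed_eq_field_fractions' (R := B) F hJu,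
    hscale, Polynomial.coeff_scaleRoots, Algebra.smul_def, map_pow, mul_comm]

end Fractions

section Purity

variable {B K : Type*} [CommRing B] [IsDomain B] [UniqueFactorizationMonoid B] [Field K]
  [Algebra B K] [FaithfulSMul B K]

theorem isIntegral_of_forall_isPrincipal {u : K}
    (h : ∀ p : Ideal B, p.IsPrime → p.IsPrincipal → ∃ J ∉ p, IsIntegral B (J • u)) :
    IsIntegral B u := by
  let F := FractionRing B
  let : Algebra F K := FractionRing.liftAlgebra B K
  have : IsScalarTower B F K := FractionRing.isScalarTower_liftAlgebra B K
  have hu : IsIntegral F u := by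
    obtain ⟨J, hJ, hJu⟩ := h ⊥ Ideal.isPrime_bot ⟨0, by simp⟩
    have hJ' : algebraMap B F J ≠ 0 := by simpa using hJ
    have := (hJu.tower_top (A := F)).smul (algebraMap B F J)⁻¹
    rwa [← algebraMap_smul F J u, inv_smul_smul₀ hJ'] at this
  have hlift : minpoly F u ∈ Polynomial.lifts (algebraMap B F) := by
    refine (Polynomial.lifts_iff_coeff_lifts _).mpr fun n ↦
      isInteger_of_forall_isPrincipal fun p hp hp' ↦ ?_
    obtain ⟨J, hJ, hJu⟩ := h p hp hp'
    exact ⟨J ^ _, fun hJp ↦ hJ (hp.mem_of_pow_mem _ hJp), isInteger_pow_smul_coeff_minpoly hu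
      (by rintro rfl; exact hJ p.zero_mem) hJu n⟩
  obtain ⟨q, hq, -, hqm⟩ :=
    Polynomial.lifts_and_degree_eq_and_monic hlift (minpoly.monic hu)
  refine ⟨q, hqm, ?_⟩
  rw [← Polynomial.aeval_def, ← Polynomial.aeval_map_algebraMap F, hq, minpoly.aeval]

end Purity

section LinearSubstitution

variable {k σ : Type*} [CommRing k] [Fintype σ]

/-- The linear form `∑ j, v j • X j` with coefficient vector `v`. -/
noncomputable def linearForm : (σ → k) →ₗ[k] MvPolynomial σ k :=
  Fintype.linearCombination k X

/-- The substitution `f ↦ f ∘ A` by the linear map with matrix `A`. -/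
noncomputable def linearSubst (A : Matrix σ σ k) : MvPolynomial σ k →ₐ[k] MvPolynomial σ k :=
  aeval fun j ↦ ∑ l, A j l • X l

theorem linearForm_apply (v : σ → k) : linearForm v = ∑ j, v j • (X j : MvPolynomial σ k) := rfl

theorem linearSubst_X (A : Matrix σ σ k) (j : σ) : linearSubst A (X j) = linearForm (A j) :=
  aeval_X _ j

theorem linearSubst_linearForm (A : Matrix σ σ k) (v : σ → k) :
    linearSubst A (linearForm v) = linearForm (Matrix.vecMul v A) := by
  simp only [linearForm_apply v, map_sum, map_smul, linearSubst_X, Matrix.vecMul_eq_sum]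

theorem linearSubst_linearSubst (A B : Matrix σ σ k) (f : MvPolynomial σ k) :
    linearSubst A (linearSubst B f) = linearSubst (B * A) f := by
  suffices (linearSubst A).comp (linearSubst B) = linearSubst (B * A) from DFunLike.congr_fun this f
  refine algHom_ext fun j ↦ ?_
  rw [AlgHom.comp_apply, linearSubst_X, linearSubst_linearForm, linearSubst_X,
    Matrix.mul_apply_eq_vecMul]

theorem isHomogeneous_linearForm (v : σ → k) : (linearForm v).IsHomogeneous 1 :=
  .sum _ _ _ fun j _ ↦ smul_eq_C_mul (X j) (v j) ▸ (isHomogeneous_X k j).C_mul (v j)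

theorem isHomogeneous_linearSubst (A : Matrix σ σ k) {f : MvPolynomial σ k} {i : ℕ}
    (hf : f.IsHomogeneous i) : (linearSubst A f).IsHomogeneous i :=
  one_mul i ▸ hf.aeval _ fun j ↦ isHomogeneous_linearForm (A j)

theorem homogeneousComponent_linearSubst (A : Matrix σ σ k) (i : ℕ) (f : MvPolynomial σ k) :
    homogeneousComponent i (linearSubst A f) = linearSubst A (homogeneousComponent i f) := by
  induction f using MvPolynomial.induction_on' with
  | monomial d c =>
    have hd : (monomial d c).IsHomogeneous d.degree := isHomogeneous_monomial c rfl
    rw [homogeneousComponent_of_mem hd,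
      homogeneousComponent_of_mem (isHomogeneous_linearSubst A hd)]
    split_ifs <;> simp
  | add f g hf hg => simp only [map_add, hf, hg]

theorem pderiv_linearForm (v : σ → k) (j : σ) : pderiv j (linearForm v) = C (v j) := by
  classical
  simp [linearForm_apply, pderiv_X, smul_eq_C_mul, Pi.single_apply]

theorem linearForm_injective : Function.Injective (linearForm : (σ → k) → MvPolynomial σ k) :=
  fun v w h ↦ funext fun j ↦ C_injective σ k <| by
    rw [← pderiv_linearForm, h, pderiv_linearForm]

theorem linearSubst_injective :
    Function.Injective (linearSubst : Matrix σ σ k → MvPolynomial σ k →ₐ[k] MvPolynomial σ k) :=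
  fun A B h ↦ funext fun j ↦ linearForm_injective <| by
    rw [← linearSubst_X, h, linearSubst_X]

theorem derivation_algHom_apply {S M : Type*} [CommRing S] [Algebra k S] [AddCommGroup M]
    [Module k M] [Module S M] (D : Derivation k S M) (φ : MvPolynomial σ k →ₐ[k] S)
    (f : MvPolynomial σ k) : D (φ f) = ∑ l, φ (pderiv l f) • D (φ (X l)) := by
  classical
  induction f using MvPolynomial.induction_on with
  | C a => simp [← algebraMap_eq]
  | add p q hp hq => simp only [map_add, hp, hq, add_smul, Finset.sum_add_distrib]
  | mul_X p i hp =>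
    simp [hp, pderiv_X, add_smul, mul_smul, Finset.sum_add_distrib, Finset.smul_sum,
      Pi.single_apply, apply_ite φ, ite_smul]

variable [DecidableEq σ]

theorem linearForm_single (j : σ) : linearForm (Pi.single j (1 : k)) = X j := by
  simp [linearForm]

theorem linearSubst_one : linearSubst (1 : Matrix σ σ k) = AlgHom.id k _ :=
  algHom_ext fun j ↦ by
    have hrow : (1 : Matrix σ σ k) j = Pi.single j 1 := funext fun _ ↦ Matrix.one_eq_pi_single
    rw [linearSubst_X, hrow, linearForm_single, AlgHom.id_apply]

end LinearSubstitution

section GroupAction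

variable {k σ : Type*} [CommRing k] [Fintype σ] [DecidableEq σ]

/-- The action of `GL` on polynomial functions, `(g • f) v = f (g⁻¹ v)`. -/
noncomputable instance glMulSemiringAction :
    MulSemiringAction (Matrix.GeneralLinearGroup σ k) (MvPolynomial σ k) where
  smul g := linearSubst (g⁻¹ : Matrix.GeneralLinearGroup σ k)
  one_smul f := by
    change linearSubst _ f = f
    simp [linearSubst_one]
  mul_smul g h f := by
    change linearSubst _ f = linearSubst _ (linearSubst _ f)
    simp [linearSubst_linearSubst]
  smul_zero _ := map_zero (linearSubst _)
  smul_add _ := map_add (linearSubst _)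
  smul_one _ := map_one (linearSubst _)
  smul_mul _ := map_mul (linearSubst _)

theorem gl_smul_def (g : Matrix.GeneralLinearGroup σ k) (f : MvPolynomial σ k) :
    g • f = linearSubst (g⁻¹ : Matrix.GeneralLinearGroup σ k) f := rfl

instance : SMulCommClass (Matrix.GeneralLinearGroup σ k) k (MvPolynomial σ k) where
  smul_comm _ c f := map_smul (linearSubst _) c f

theorem gl_eq_of_forall_smul_eq {g h : Matrix.GeneralLinearGroup σ k}
    (hgh : ∀ f : MvPolynomial σ k, g • f = h • f) : g = h :=
  inv_injective (Units.ext (linearSubst_injective (AlgHom.ext hgh)))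

/-- The algebra `k[V]^Γ` of polynomials `f` with `f ∘ γ = f` for all `γ ∈ Γ`. -/
noncomputable def invariantSubalgebra (Γ : Subgroup (Matrix.GeneralLinearGroup σ k)) :
    Subalgebra k (MvPolynomial σ k) where
  carrier := {f | ∀ γ ∈ Γ, linearSubst (γ : Matrix σ σ k) f = f}
  mul_mem' ha hb γ hγ := by rw [map_mul, ha γ hγ, hb γ hγ]
  add_mem' ha hb γ hγ := by rw [map_add, ha γ hγ, hb γ hγ]
  algebraMap_mem' c γ _ := (linearSubst (γ : Matrix σ σ k)).commutes c

variable {Γ : Subgroup (Matrix.GeneralLinearGroup σ k)}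

theorem mem_invariantSubalgebra_iff {f : MvPolynomial σ k} :
    f ∈ invariantSubalgebra Γ ↔ ∀ γ ∈ Γ, γ • f = f := by
  refine ⟨fun h γ hγ ↦ h γ⁻¹ (Γ.inv_mem hγ), fun h γ hγ ↦ ?_⟩
  simpa [gl_smul_def] using h γ⁻¹ (Γ.inv_mem hγ)

theorem homogeneousComponent_mem_invariantSubalgebra {f : MvPolynomial σ k}
    (hf : f ∈ invariantSubalgebra Γ) (i : ℕ) :
    homogeneousComponent i f ∈ invariantSubalgebra Γ := fun γ hγ ↦ by
  rw [← homogeneousComponent_linearSubst, hf γ hγ]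

theorem invariantSubalgebra_linearMap_ext {M : Type*} [AddCommGroup M] [Module k M]
    {F G : invariantSubalgebra Γ →ₗ[k] M}
    (h : ∀ (i : ℕ) (a : invariantSubalgebra Γ), (a : MvPolynomial σ k).IsHomogeneous i →
      F a = G a) : F = G := by
  ext a
  have ha : a = ∑ i ∈ Finset.range ((a : MvPolynomial σ k).totalDegree + 1),
      ⟨_, homogeneousComponent_mem_invariantSubalgebra a.2 i⟩ := by
    ext1
    simp [sum_homogeneousComponent]
  rw [ha, map_sum, map_sum]
  exact Finset.sum_congr rfl fun i _ ↦ h i _ (homogeneousComponent_isHomogeneous i _)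

instance : Algebra.IsInvariant (invariantSubalgebra Γ) (MvPolynomial σ k) Γ where
  isInvariant f hf := ⟨⟨f, mem_invariantSubalgebra_iff.2 fun γ hγ ↦ hf ⟨γ, hγ⟩⟩, rfl⟩

instance : IsGaloisGroup Γ (invariantSubalgebra Γ) (MvPolynomial σ k) where
  faithful := ⟨fun h ↦ Subtype.ext (gl_eq_of_forall_smul_eq h)⟩
  commutes := ⟨fun γ a f ↦ by
    rw [Algebra.smul_def, Algebra.smul_def, smul_mul']
    congr 1
    exact mem_invariantSubalgebra_iff.1 a.2 γ γ.2⟩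
  isInvariant := inferInstance

instance [Finite Γ] : Algebra.IsIntegral (invariantSubalgebra Γ) (MvPolynomial σ k) :=
  Algebra.IsInvariant.isIntegral _ _ Γ

theorem mem_of_forall_smul_eq_self [IsDomain k] [Finite Γ] {g : Matrix.GeneralLinearGroup σ k}
    (hg : ∀ f ∈ invariantSubalgebra Γ, g • f = f) : g ∈ Γ := by
  let τ : MvPolynomial σ k ≃ₐ[invariantSubalgebra Γ] MvPolynomial σ k :=
    { MulSemiringAction.toRingEquiv _ _ g with commutes' := fun a ↦ hg a a.2 }
  obtain ⟨γ, hγ⟩ := (IsGaloisGroup.mulEquivAlgEquiv Γ (invariantSubalgebra Γ) _).surjective τ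
  rw [gl_eq_of_forall_smul_eq (fun f ↦ (DFunLike.congr_fun hγ f).symm : ∀ f, g • f = γ.1 • f)]
  exact γ.2

theorem smul_mem_invariantSubalgebra_of_mem_normalizer {g : Matrix.GeneralLinearGroup σ k}
    (hg : g ∈ Subgroup.normalizer (Γ : Set (Matrix.GeneralLinearGroup σ k))) {f : MvPolynomial σ k}
    (hf : f ∈ invariantSubalgebra Γ) : g • f ∈ invariantSubalgebra Γ := by
  rw [mem_invariantSubalgebra_iff] at hf ⊢
  intro γ hγ
  have hconj : γ * g = g * (g⁻¹ * γ * g) := by group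
  rw [← mul_smul, hconj, mul_smul, hf _ ((Subgroup.mem_normalizer_iff''.mp hg γ).mp hγ)]

theorem mem_normalizer_of_forall_smul_mem_iff [IsDomain k] [Finite Γ]
    {g : Matrix.GeneralLinearGroup σ k}
    (hg : ∀ f, g • f ∈ invariantSubalgebra Γ ↔ f ∈ invariantSubalgebra Γ) :
    g ∈ Subgroup.normalizer (Γ : Set (Matrix.GeneralLinearGroup σ k)) := by
  refine Subgroup.mem_normalizer_iff''.mpr fun γ ↦ ⟨fun hγ ↦ ?_, fun hγ ↦ ?_⟩
  · refine mem_of_forall_smul_eq_self fun f hf ↦ ?_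
    rw [mul_smul, mul_smul, mem_invariantSubalgebra_iff.mp ((hg f).mpr hf) γ hγ, inv_smul_smul]
  · refine mem_of_forall_smul_eq_self fun f hf ↦ ?_
    have hconj : γ = g * (g⁻¹ * γ * g) * g⁻¹ := by group
    have hf' : g⁻¹ • f ∈ invariantSubalgebra Γ := by rwa [← hg, smul_inv_smul]
    rw [hconj, mul_smul, mul_smul, mem_invariantSubalgebra_iff.mp hf' _ hγ, smul_inv_smul]

end GroupAction

section Inertia

theorem exists_notMem_smul_derivation_eq_zero {k A B G M : Type*} [Field k] [Infinite k]
    [CommRing A] [CommRing B] [Algebra k B] [Algebra A B] [Group G] [Finite G]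
    [MulSemiringAction G B] [SMulCommClass G k B] [Algebra.IsInvariant A B G] [AddCommGroup M]
    [Module k M] [Module A M] [Module B M] [IsScalarTower k B M] [IsScalarTower A B M]
    (D : Derivation k B M) (hD : ∀ a, D (algebraMap A B a) = 0)
    (p : Ideal B) [p.IsPrime] (hp : p.inertia G = ⊥) (b : B) : ∃ J ∉ p, J • D b = 0 := by
  classical
  have := Fintype.ofFinite G
  obtain ⟨D', hD'⟩ := exists_derivation_of_map_algebraMap_eq_zero D hD
  let T : Submodule k B :=
    ((Submodule.torsion' B M p.primeCompl).restrictScalars k).comap D.toLinearMap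
  let W : G → Submodule k B := fun g ↦
    (p.restrictScalars k).comap (DistribSMul.toLinearMap k B g - LinearMap.id)
  have hW {g : G} (hg : g ≠ 1) : W g ≠ ⊤ := fun h ↦ hg <| by
    rw [← Subgroup.mem_bot, ← hp]
    exact fun x ↦ (h ▸ Submodule.mem_top : x ∈ W g)
  -- A vector space over an infinite field is not a finite union of proper subspaces: if `T` were
  -- proper, some `x ∉ T` would be moved modulo `p` by every `g ≠ 1`.
  suffices hT : T = ⊤ by
    obtain ⟨⟨J, hJ⟩, hJb⟩ : b ∈ T := hT ▸ Submodule.mem_top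
    exact ⟨J, hJ, hJb⟩
  obtain ⟨i, hi⟩ := Subspace.exists_eq_top_of_iUnion_eq_univ (k := k) (E := B)
    (p := fun o : Option {g : G // g ≠ 1} ↦ o.elim T fun g ↦ W g) <| by
      refine Set.eq_univ_of_forall fun x ↦ Set.mem_iUnion.mpr ?_
      by_contra! hx
      refine hx none ⟨⟨∏ g ∈ Finset.univ.erase (1 : G), (x - g • x), ?_⟩, ?_⟩
      · refine Submonoid.prod_mem _ fun g hg hgp ↦ hx (some ⟨g, Finset.ne_of_mem_erase hg⟩) ?_
        change g • x - x ∈ p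
        rwa [← neg_sub, neg_mem_iff]
      · change _ • D x = 0
        rw [← hD']
        exact prod_sub_smul_derivation_eq_zero D' x
  cases i with
  | none => exact hi
  | some g => exact absurd hi (hW g.2)

variable {k σ : Type*} [Field k] [Fintype σ]

theorem irreducible_linearForm {v : σ → k} (hv : v ≠ 0) : Irreducible (linearForm v) := by
  have hv' : linearForm v ≠ 0 := (map_ne_zero_iff _ linearForm_injective).mpr hv
  refine irreducible_of_totalDegree_eq_one ((isHomogeneous_linearForm v).totalDegree hv')
    fun x hx ↦ isUnit_iff_ne_zero.mpr ?_
  rintro rfl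
  exact hv' (ext _ _ fun i ↦ zero_dvd_iff.mp (hx i))

theorem exists_smul_eq_of_linearForm_dvd {v w : σ → k} (hv : v ≠ 0)
    (h : linearForm v ∣ linearForm w) : ∃ c : k, c • v = w := by
  obtain rfl | hw := eq_or_ne w 0
  · exact ⟨0, zero_smul k v⟩
  obtain ⟨u, hu⟩ := (irreducible_linearForm hv).associated_of_dvd (irreducible_linearForm hw) h
  obtain ⟨c, -, hc⟩ := isUnit_iff_eq_C_of_isReduced.mp u.isUnit
  refine ⟨c, linearForm_injective ?_⟩
  rw [map_smul, smul_eq_C_mul, mul_comm, ← hc, hu]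

theorem finrank_comap_linearForm_le_one (p : Ideal (MvPolynomial σ k)) [p.IsPrime]
    (hp : p.IsPrincipal) :
    Module.finrank k ((p.restrictScalars k).comap (linearForm (k := k) (σ := σ))) ≤ 1 := by
  rw [Submodule.finrank_le_one_iff_isPrincipal]
  obtain ⟨π, rfl⟩ := hp
  have hπ : ¬IsUnit π := mt Ideal.span_singleton_eq_top.mpr (Ideal.IsPrime.ne_top ‹_›)
  have hL {v : σ → k} : v ∈ ((Ideal.span {π}).restrictScalars k).comap linearForm ↔
      π ∣ linearForm v := Ideal.mem_span_singleton
  by_cases hbot : ((Ideal.span {π}).restrictScalars k).comap linearForm = ⊥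
  · exact ⟨0, by rw [Ideal.submodule_span_eq, hbot, Submodule.span_zero_singleton]⟩
  obtain ⟨v, hv, hv0⟩ := Submodule.exists_mem_ne_zero_of_ne_bot hbot
  refine ⟨v, le_antisymm (fun w hw ↦ ?_) ((Submodule.span_singleton_le_iff_mem _ _).mpr hv)⟩
  have hvπ : linearForm v ∣ π :=
    ((irreducible_linearForm hv0).dvd_iff.mp (hL.mp hv)).resolve_left hπ |>.dvd
  exact Submodule.mem_span_singleton.mpr
    (exists_smul_eq_of_linearForm_dvd hv0 (hvπ.trans (hL.mp hw)))

variable [DecidableEq σ]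

/-- `Γ` contains no pseudoreflection: only `1` fixes a hyperplane pointwise. Fixing one is encoded
as `rank (1 - γ) ≤ 1`, so that `γ = 1` needs no separate treatment. -/
def HasNoPseudoreflection (Γ : Subgroup (Matrix.GeneralLinearGroup σ k)) : Prop :=
  ∀ γ ∈ Γ, (1 - (γ : Matrix σ σ k)).rank ≤ 1 → γ = 1

theorem rank_one_sub_inv_le_one_of_mem_inertia {p : Ideal (MvPolynomial σ k)} [p.IsPrime]
    (hp : p.IsPrincipal) {g : Matrix.GeneralLinearGroup σ k}
    (hg : g ∈ p.inertia (Matrix.GeneralLinearGroup σ k)) :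
    (1 - ((g⁻¹ : Matrix.GeneralLinearGroup σ k) : Matrix σ σ k)).rank ≤ 1 := by
  rw [Matrix.rank_eq_finrank_span_row]
  refine (Submodule.finrank_mono (Submodule.span_le.mpr ?_)).trans
    (finrank_comap_linearForm_le_one p hp)
  rintro _ ⟨i, rfl⟩
  have hi : linearForm ((1 - ((g⁻¹ : Matrix.GeneralLinearGroup σ k) : Matrix σ σ k)) i) =
      -(g • X i - X i) := by
    rw [gl_smul_def, linearSubst_X, neg_sub, ← AlgHom.id_apply (R := k) (X i), ← linearSubst_one,
      linearSubst_X, ← map_sub]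
    rfl
  rw [SetLike.mem_coe, Submodule.mem_comap, Submodule.restrictScalars_mem,
    Matrix.row, hi]
  exact neg_mem (hg (X i))

theorem inertia_eq_bot_of_hasNoPseudoreflection {Γ : Subgroup (Matrix.GeneralLinearGroup σ k)}
    (hΓ : HasNoPseudoreflection Γ) {p : Ideal (MvPolynomial σ k)} [p.IsPrime]
    (hp : p.IsPrincipal) : p.inertia Γ = ⊥ := by
  refine (Subgroup.eq_bot_iff_forall _).mpr fun γ hγ ↦ ?_
  rw [← inv_eq_one, ← OneMemClass.coe_eq_one]
  exact hΓ _ (inv_mem γ.2) (rank_one_sub_inv_le_one_of_mem_inertia hp hγ)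

variable [Infinite k] {K : Type*} [Field K] [Algebra k K] [Algebra (MvPolynomial σ k) K]
  [IsScalarTower k (MvPolynomial σ k) K] [FaithfulSMul (MvPolynomial σ k) K]

theorem isIntegral_derivation_of_hasNoPseudoreflection
    {Γ : Subgroup (Matrix.GeneralLinearGroup σ k)} [Finite Γ] (hΓ : HasNoPseudoreflection Γ)
    (D : Derivation k (MvPolynomial σ k) K)
    (hD : ∀ a ∈ invariantSubalgebra Γ, IsIntegral (MvPolynomial σ k) (D a))
    (f : MvPolynomial σ k) : IsIntegral (MvPolynomial σ k) (D f) := by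
  let N := (integralClosure (MvPolynomial σ k) K).toSubmodule
  have hN {u : K} : N.mkQ u = 0 ↔ IsIntegral (MvPolynomial σ k) u :=
    Submodule.Quotient.mk_eq_zero N
  refine isIntegral_of_forall_isPrincipal fun p hp hp' ↦ ?_
  obtain ⟨J, hJ, hJf⟩ := exists_notMem_smul_derivation_eq_zero (A := invariantSubalgebra Γ)
    (N.mkQ.compDer D) (fun a ↦ hN.mpr (hD a a.2)) p
    (inertia_eq_bot_of_hasNoPseudoreflection hΓ hp') f
  exact ⟨J, hJ, hN.mp hJf⟩

end Inertia

section Reflections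

open Matrix

theorem exists_eq_vecMulVec_of_rank_le_one {k m n : Type*} [Field k] [Finite m] [Fintype n]
    {A : Matrix m n k} (hA : A.rank ≤ 1) : ∃ a b, A = vecMulVec a b := by
  rw [rank_eq_finrank_span_row, Submodule.finrank_le_one_iff_isPrincipal] at hA
  obtain ⟨b, hb⟩ := hA
  have hrow (i : m) : ∃ c : k, c • b = A i :=
    Submodule.mem_span_singleton.mp (hb ▸ Submodule.subset_span ⟨i, rfl⟩)
  choose a ha using hrow
  exact ⟨a, b, Matrix.ext fun i j ↦ (congrFun (ha i) j).symm⟩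

theorem sub_pow_eq_sub_nsmul_of_mul_self_eq_zero {R : Type*} [Ring R] {N : R} (hN : N * N = 0)
    (m : ℕ) : (1 - N) ^ m = 1 - m • N := by
  induction m with
  | zero => simp
  | succ m ih => rw [pow_succ, ih, sub_mul, one_mul, smul_mul_assoc, mul_sub, mul_one, hN, sub_zero,
      succ_nsmul', sub_sub]

theorem eq_one_of_rank_one_sub_le_one {k σ : Type*} [Field k] [CharZero k] [Fintype σ]
    [DecidableEq σ] {g : Matrix σ σ k} (hdet : g.det = 1) (hg : IsOfFinOrder g)
    (hrank : (1 - g).rank ≤ 1) : g = 1 := by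
  obtain ⟨a, b, hab⟩ := exists_eq_vecMulVec_of_rank_le_one hrank
  have hba : b ⬝ᵥ a = 0 := by
    rw [← sub_sub_cancel 1 g, hab, vecMulVec_eq Unit, det_one_sub_mul_comm] at hdet
    simpa [mul_apply, dotProduct] using hdet
  have hsq : (1 - g) * (1 - g) = 0 := by
    rw [hab, vecMulVec_mul_vecMulVec, hba, zero_smul, vecMulVec_zero]
  obtain ⟨m, hm, hgm⟩ := isOfFinOrder_iff_pow_eq_one.mp hg
  rw [← sub_sub_cancel 1 g, sub_pow_eq_sub_nsmul_of_mul_self_eq_zero hsq, sub_eq_self,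
    ← Nat.cast_smul_eq_nsmul k, smul_eq_zero_iff_right (Nat.cast_ne_zero.mpr hm.ne'),
    sub_eq_zero] at hgm
  exact hgm.symm

theorem hasNoPseudoreflection_of_forall_det_eq_one {k σ : Type*} [Field k] [CharZero k] [Fintype σ]
    [DecidableEq σ] {Γ : Subgroup (GeneralLinearGroup σ k)} [Finite Γ]
    (hΓ : ∀ γ ∈ Γ, (γ : Matrix σ σ k).det = 1) : HasNoPseudoreflection Γ := fun γ hγ hrank ↦ by
  have hfin : IsOfFinOrder γ :=
    Submonoid.isOfFinOrder_coe.mpr (isOfFinOrder_of_finite (⟨γ, hγ⟩ : Γ))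
  exact Units.ext (eq_one_of_rank_one_sub_le_one (hΓ γ hγ) (Units.isOfFinOrder_val.mpr hfin) hrank)

end Reflections

section Euler

variable (k σ : Type*) [CommRing k]

/-- The Euler derivation `∑ j, X j • ∂_j`, which multiplies forms of degree `i` by `i`. -/
noncomputable def eulerDerivation : Derivation k (MvPolynomial σ k) (MvPolynomial σ k) :=
  mkDerivation k X

variable {k σ}

theorem eulerDerivation_X (j : σ) : eulerDerivation k σ (X j) = X j := mkDerivation_X k X j

theorem lie_eulerDerivation_pderiv (j : σ) :
    ⁅eulerDerivation k σ, (pderiv j : Derivation k (MvPolynomial σ k) (MvPolynomial σ k))⁆ =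
      -pderiv j := by
  refine derivation_ext fun l ↦ ?_
  obtain rfl | hlj := eq_or_ne l j
  · simp [Derivation.commutator_apply, eulerDerivation_X]
  · simp [Derivation.commutator_apply, eulerDerivation_X, pderiv_X_of_ne hlj]

theorem eulerDerivation_monomial (m : σ →₀ ℕ) (c : k) :
    eulerDerivation k σ (monomial m c) = m.degree • monomial m c := by
  have hterm : ∀ j ∈ m.support,
      monomial (m - Finsupp.single j 1) (m j : k) • X j = monomial m (m j : k) := fun j hj ↦ by
    rw [smul_eq_mul, X, monomial_mul, mul_one, tsub_add_cancel_of_le]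
    exact Finsupp.single_le_iff.mpr (Nat.one_le_iff_ne_zero.mpr (Finsupp.mem_support_iff.mp hj))
  rw [eulerDerivation, mkDerivation_monomial, Finsupp.sum, Finset.sum_congr rfl hterm, ← map_sum,
    ← Nat.cast_sum, ← Finsupp.degree_apply, smul_monomial, smul_monomial, smul_eq_mul, nsmul_eq_mul,
    mul_comm]

theorem coeff_eulerDerivation (f : MvPolynomial σ k) (m : σ →₀ ℕ) :
    coeff m (eulerDerivation k σ f) = m.degree • coeff m f := by
  classical
  induction f using MvPolynomial.induction_on' with
  | monomial d c =>
    rw [eulerDerivation_monomial, coeff_smul, coeff_monomial]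
    split_ifs with h <;> simp [h]
  | add f g hf hg => simp only [map_add, coeff_add, hf, hg, smul_add]

theorem eulerDerivation_apply_of_isHomogeneous {f : MvPolynomial σ k} {i : ℕ}
    (hf : f.IsHomogeneous i) : eulerDerivation k σ f = i • f := by
  ext m
  rw [coeff_eulerDerivation, coeff_smul]
  obtain rfl | hm := eq_or_ne m.degree i
  · rfl
  · rw [hf.coeff_eq_zero hm, smul_zero, smul_zero]

theorem eq_C_of_eulerDerivation_eq_zero [CharZero k] [IsDomain k] {f : MvPolynomial σ k}
    (hf : eulerDerivation k σ f = 0) : ∃ c, f = C c := by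
  classical
  refine ⟨coeff 0 f, ext _ _ fun m ↦ ?_⟩
  obtain rfl | hm := eq_or_ne m 0
  · rw [coeff_zero_C]
  · have hm' := coeff_eulerDerivation f m
    rw [hf, coeff_zero, eq_comm,
      smul_eq_zero_iff_right (mt (Finsupp.degree_eq_zero_iff m).mp hm)] at hm'
    rw [hm', coeff_C, if_neg hm.symm]

end Euler

section WeightOne

variable {k σ K : Type*} [Field k] [CharZero k] [Field K] [Algebra k K]
  [Algebra (MvPolynomial σ k) K] [FaithfulSMul (MvPolynomial σ k) K]

theorem mem_range_algebraMap_of_isIntegral [IsAlgClosed k]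
    [IsScalarTower k (MvPolynomial σ k) K] {E : Derivation k K K}
    (hE : ∀ f, E (algebraMap (MvPolynomial σ k) K f) = algebraMap _ K (eulerDerivation k σ f))
    {u : K} (hu : IsIntegral (MvPolynomial σ k) u) (hEu : E u = 0) :
    u ∈ (algebraMap k K).range := by
  let : Differential (MvPolynomial σ k) := ⟨(eulerDerivation k σ).restrictScalars ℤ⟩
  let : Differential K := ⟨E.restrictScalars ℤ⟩
  have : DifferentialAlgebra (MvPolynomial σ k) K := ⟨hE⟩
  have hlift : minpoly (MvPolynomial σ k) u ∈ Polynomial.lifts (C : k →+* MvPolynomial σ k) := by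
    refine (Polynomial.lifts_iff_coeff_lifts _).mpr fun n ↦ ?_
    obtain ⟨c, hc⟩ := eq_C_of_eulerDerivation_eq_zero (deriv_coeff_minpoly_eq_zero hu hEu n)
    exact ⟨c, hc.symm⟩
  obtain ⟨q, hq, -, hqm⟩ := Polynomial.lifts_and_degree_eq_and_monic hlift (minpoly.monic hu)
  have hu' : IsIntegral k u := by
    refine ⟨q, hqm, ?_⟩
    rw [← Polynomial.aeval_def, ← Polynomial.aeval_map_algebraMap (MvPolynomial σ k)]
    exact hq ▸ minpoly.aeval _ u
  exact minpoly.mem_range_of_degree_eq_one k u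
    (IsAlgClosed.degree_eq_one_of_irreducible k (minpoly.irreducible hu'))

variable [Algebra.IsAlgebraic (MvPolynomial σ k) K] {E : Derivation k K K}
  (hE : ∀ f, E (algebraMap (MvPolynomial σ k) K f) = algebraMap _ K (eulerDerivation k σ f))
  {D : σ → Derivation k K K}
  (hD : ∀ j f, D j (algebraMap (MvPolynomial σ k) K f) = algebraMap _ K (pderiv j f))

include hE hD

theorem lie_extension_pderiv (j : σ) : ⁅E, D j⁆ = -D j := by
  have : CharZero K := charZero_of_injective_algebraMap (algebraMap k K).injective
  refine derivation_ext_of_isAlgebraic (R := MvPolynomial σ k) fun f ↦ ?_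
  rw [Derivation.commutator_apply, hD, hE, hE, hD, ← map_sub, ← Derivation.commutator_apply,
    lie_eulerDerivation_pderiv, Derivation.neg_apply, Derivation.neg_apply, hD, map_neg]

variable [Fintype σ]

theorem eulerDerivation_extension_apply (u : K) :
    E u = ∑ j, algebraMap (MvPolynomial σ k) K (X j) * D j u := by
  have : CharZero K := charZero_of_injective_algebraMap (algebraMap k K).injective
  have hsum (u : K) : (∑ j, algebraMap (MvPolynomial σ k) K (X j) • D j) u =
      ∑ j, algebraMap (MvPolynomial σ k) K (X j) * D j u := by
    rw [← Derivation.coeFnAddMonoidHom_apply, map_sum, Finset.sum_apply]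
    rfl
  rw [← hsum]
  congr 1
  refine derivation_ext_of_isAlgebraic (R := MvPolynomial σ k) fun f ↦ ?_
  rw [hsum, hE, ← AlgHom.id_apply (R := k) f, derivation_algHom_apply]
  simp [hD, eulerDerivation_X, mul_comm]

theorem exists_eq_linearForm_of_isIntegral [IsScalarTower k (MvPolynomial σ k) K]
    [IsAlgClosed k] {w : K} (hEw : E w = w)
    (hw : ∀ j, IsIntegral (MvPolynomial σ k) (D j w)) :
    ∃ v, w = algebraMap (MvPolynomial σ k) K (linearForm v) := by
  have hconst (j : σ) : D j w ∈ (algebraMap k K).range := by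
    refine mem_range_algebraMap_of_isIntegral hE (hw j) ?_
    have hlie := DFunLike.congr_fun (lie_extension_pderiv hE hD j) w
    rw [Derivation.commutator_apply, hEw, Derivation.neg_apply] at hlie
    simpa using hlie
  choose v hv using hconst
  refine ⟨v, ?_⟩
  rw [← hEw, eulerDerivation_extension_apply hE hD, linearForm_apply, map_sum]
  refine Finset.sum_congr rfl fun j _ ↦ ?_
  rw [← hv, smul_eq_C_mul, map_mul, ← algebraMap_eq, ← IsScalarTower.algebraMap_apply, mul_comm]

end WeightOne

section Lifting

theorem isIntegralElem_comp_iff {R S T : Type*} [CommRing R] [CommRing S] [CommRing T]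
    {f : R →+* S} (hf : f.IsIntegral) {g : S →+* T} {x : T} :
    (g.comp f).IsIntegralElem x ↔ g.IsIntegralElem x := by
  refine ⟨RingHom.IsIntegralElem.of_comp, fun hx ↦ ?_⟩
  algebraize [f, g, g.comp f]
  exact isIntegral_trans (R := R) (A := S) x hx

theorem exists_injective_lift {k A B K : Type*} [CommRing k] [CommRing A] [CommRing B] [IsDomain B]
    [Algebra k A] [Algebra k B] [Algebra A B] [IsScalarTower k A B] [Algebra.IsIntegral A B]
    [FaithfulSMul A B] [Field K] [IsAlgClosed K] [Algebra k K] (j : A →ₐ[k] K)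
    (hj : Function.Injective j) :
    ∃ φ : B →ₐ[k] K, Function.Injective φ ∧ ∀ a, φ (algebraMap A B a) = j a := by
  let : Algebra A K := j.toAlgebra
  have : IsScalarTower k A K := .of_algebraMap_eq fun c ↦ (j.commutes c).symm
  have : IsDomain A := (FaithfulSMul.algebraMap_injective A B).isDomain
  have : FaithfulSMul A K := (faithfulSMul_iff_algebraMap_injective A K).mpr hj
  let φ : B →ₐ[A] K := IsAlgClosed.lift
  refine ⟨φ.restrictScalars k, ?_, φ.commutes⟩
  refine (RingHom.injective_iff_ker_eq_bot φ).mpr (Ideal.eq_bot_of_comap_eq_bot (R := A) ?_)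
  rw [← (RingHom.injective_iff_ker_eq_bot (algebraMap A K)).mp hj, ← φ.comp_algebraMap]
  exact RingHom.comap_ker φ.toRingHom (algebraMap A B)

theorem derivation_apply_algHom_eq {k S K : Type*} [CommRing k] [CommRing S] [IsDomain S]
    [Field K] [Algebra k S] [Algebra k K] [CharZero S] {A : Subalgebra k S}
    [Algebra.IsAlgebraic A S] {φ : S →ₐ[k] K} (hφ : Function.Injective φ) {E : Derivation k K K}
    {d : Derivation k S S} (h : ∀ a : A, E (φ a) = φ (d a)) (b : S) : E (φ b) = φ (d b) := by
  let : Algebra S K := φ.toAlgebra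
  have : FaithfulSMul S K := (faithfulSMul_iff_algebraMap_injective S K).mpr hφ
  have : IsScalarTower k S K := .of_algebraMap_eq fun c ↦ (φ.commutes c).symm
  have hDer : E.compAlgebraMap S = (Algebra.linearMap S K).compDer d :=
    derivation_ext_of_isAlgebraic (R := A) h
  exact DFunLike.congr_fun hDer b

variable {k σ : Type*} [Field k] [Fintype σ] [DecidableEq σ]
  {Γ : Subgroup (Matrix.GeneralLinearGroup σ k)} [Finite Γ]

variable {K : Type*} [Field K] [Algebra k K]

theorem isIntegralElem_derivation_of_hasNoPseudoreflection [Infinite k]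
    (hΓ : HasNoPseudoreflection Γ) {φ : MvPolynomial σ k →ₐ[k] K} (hφ : Function.Injective φ)
    (D : Derivation k K K) (hD : ∀ a ∈ invariantSubalgebra Γ, φ.toRingHom.IsIntegralElem (D (φ a)))
    (f : MvPolynomial σ k) : φ.toRingHom.IsIntegralElem (D (φ f)) := by
  let : Algebra (MvPolynomial σ k) K := φ.toAlgebra
  have : FaithfulSMul (MvPolynomial σ k) K := (faithfulSMul_iff_algebraMap_injective _ K).mpr hφ
  have : IsScalarTower k (MvPolynomial σ k) K := .of_algebraMap_eq fun c ↦ (φ.commutes c).symm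
  exact isIntegral_derivation_of_hasNoPseudoreflection hΓ (D.compAlgebraMap (MvPolynomial σ k)) hD f

variable [Algebra (MvPolynomial σ k) K]
  {ψ : invariantSubalgebra Γ ≃ₐ[k] invariantSubalgebra Γ} {φ : MvPolynomial σ k →ₐ[k] K}
  (hφψ : ∀ a : invariantSubalgebra Γ, φ a = algebraMap (MvPolynomial σ k) K (ψ a))

include hφψ

theorem isIntegralElem_lift_iff {u : K} :
    φ.toRingHom.IsIntegralElem u ↔ IsIntegral (MvPolynomial σ k) u := by
  let ι := algebraMap (invariantSubalgebra Γ) (MvPolynomial σ k)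
  have hι : ι.IsIntegral := algebraMap_isIntegral_iff.mpr inferInstance
  have hιψ : (ι.comp ψ.toAlgHom.toRingHom).IsIntegral :=
    .trans _ _ (RingHom.isIntegral_of_surjective ψ.toAlgHom.toRingHom ψ.surjective) hι
  have hcomp : φ.toRingHom.comp ι =
      (algebraMap (MvPolynomial σ k) K).comp (ι.comp ψ.toAlgHom.toRingHom) := RingHom.ext hφψ
  rw [← isIntegralElem_comp_iff hι, hcomp, isIntegralElem_comp_iff hιψ, IsIntegral]

variable [CharZero k] (hφ : Function.Injective φ) {E : Derivation k K K}
  (hE : ∀ f, E (algebraMap (MvPolynomial σ k) K f) = algebraMap _ K (eulerDerivation k σ f))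
  (hψ : ∀ (i : ℕ) (a : invariantSubalgebra Γ), (a : MvPolynomial σ k).IsHomogeneous i →
    (ψ a : MvPolynomial σ k).IsHomogeneous i)

include hφ hE hψ

theorem eulerDerivation_extension_lift (f : MvPolynomial σ k) :
    E (φ f) = φ (eulerDerivation k σ f) := by
  let ι : invariantSubalgebra Γ →ₗ[k] MvPolynomial σ k := (invariantSubalgebra Γ).val.toLinearMap
  have hlin : E.toLinearMap ∘ₗ φ.toLinearMap ∘ₗ ι =
      φ.toLinearMap ∘ₗ (eulerDerivation k σ).toLinearMap ∘ₗ ι := by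
    refine invariantSubalgebra_linearMap_ext fun i a ha ↦ ?_
    change E (φ a) = φ (eulerDerivation k σ a)
    rw [eulerDerivation_apply_of_isHomogeneous ha, hφψ, hE,
      eulerDerivation_apply_of_isHomogeneous (hψ i a ha), map_nsmul, map_nsmul, hφψ]
  exact derivation_apply_algHom_eq hφ (LinearMap.congr_fun hlin) f

theorem exists_lift_X_eq_linearForm [IsAlgClosed k] (hΓ : HasNoPseudoreflection Γ)
    [IsScalarTower k (MvPolynomial σ k) K] [FaithfulSMul (MvPolynomial σ k) K]
    [Algebra.IsAlgebraic (MvPolynomial σ k) K] {D : σ → Derivation k K K}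
    (hD : ∀ j f, D j (algebraMap (MvPolynomial σ k) K f) = algebraMap _ K (pderiv j f)) (l : σ) :
    ∃ v, φ (X l) = algebraMap (MvPolynomial σ k) K (linearForm v) := by
  refine exists_eq_linearForm_of_isIntegral hE hD ?_ fun j ↦ ?_
  · rw [eulerDerivation_extension_lift hφψ hφ hE hψ, eulerDerivation_X]
  rw [← isIntegralElem_lift_iff hφψ]
  refine isIntegralElem_derivation_of_hasNoPseudoreflection hΓ hφ (D j) (fun a ha ↦ ?_) (X l)
  rw [isIntegralElem_lift_iff hφψ, hφψ ⟨a, ha⟩, hD]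
  exact isIntegral_algebraMap

end Lifting

section GradedAutomorphism

variable {k σ : Type*} [Field k] [CharZero k] [IsAlgClosed k] [Fintype σ] [DecidableEq σ]
  {Γ : Subgroup (Matrix.GeneralLinearGroup σ k)} [Finite Γ] (hΓ : HasNoPseudoreflection Γ)
  (ψ : invariantSubalgebra Γ ≃ₐ[k] invariantSubalgebra Γ)
  (hψ : ∀ (i : ℕ) (a : invariantSubalgebra Γ), (a : MvPolynomial σ k).IsHomogeneous i →
    (ψ a : MvPolynomial σ k).IsHomogeneous i)

include hΓ hψ

theorem exists_linearSubst_eq_of_graded : ∃ M : Matrix σ σ k, Function.Injective (linearSubst M) ∧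
    ∀ a : invariantSubalgebra Γ, (ψ a : MvPolynomial σ k) = linearSubst M a := by
  let K := AlgebraicClosure (FractionRing (MvPolynomial σ k))
  have : Algebra.IsAlgebraic (MvPolynomial σ k) K :=
    (IsFractionRing.comap_isAlgebraic_iff (K := FractionRing (MvPolynomial σ k))).mpr inferInstance
  have : FaithfulSMul (MvPolynomial σ k) K := .trans _ (FractionRing (MvPolynomial σ k)) _
  have : CharZero K := charZero_of_injective_algebraMap (algebraMap k K).injective
  let i : MvPolynomial σ k →ₐ[k] K := IsScalarTower.toAlgHom k _ K
  have hi : Function.Injective i := FaithfulSMul.algebraMap_injective _ K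
  obtain ⟨φ, hφ, hφψ⟩ := exists_injective_lift (B := MvPolynomial σ k)
    (i.comp ((invariantSubalgebra Γ).val.comp ψ.toAlgHom))
    (hi.comp (Subtype.val_injective.comp ψ.injective))
  obtain ⟨E, hE⟩ := exists_derivation_extension
    ((Algebra.linearMap (MvPolynomial σ k) K).compDer (eulerDerivation k σ))
  choose D hD using fun j ↦ exists_derivation_extension
    ((Algebra.linearMap (MvPolynomial σ k) K).compDer (pderiv (R := k) j))
  choose M hM using exists_lift_X_eq_linearForm hφψ hφ hE hψ hΓ hD
  have hφM : φ = i.comp (linearSubst (Matrix.of M)) :=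
    algHom_ext fun l ↦ (hM l).trans (congrArg i (linearSubst_X (Matrix.of M) l).symm)
  refine ⟨Matrix.of M, .of_comp (f := i) ?_, fun a ↦ hi ?_⟩
  · rwa [← AlgHom.coe_comp, ← hφM]
  · rw [← AlgHom.comp_apply, ← hφM]
    exact (hφψ a).symm

theorem exists_gl_smul_eq_of_graded : ∃ g : Matrix.GeneralLinearGroup σ k,
    g ∈ Subgroup.normalizer (Γ : Set (Matrix.GeneralLinearGroup σ k)) ∧
      ∀ a : invariantSubalgebra Γ, (ψ a : MvPolynomial σ k) = g • (a : MvPolynomial σ k) := by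
  obtain ⟨M, hM, hψM⟩ := exists_linearSubst_eq_of_graded hΓ ψ hψ
  have hdet : M.det ≠ 0 := fun h ↦ by
    obtain ⟨v, hv, hvM⟩ := Matrix.exists_vecMul_eq_zero_iff.mpr h
    refine hv (linearForm_injective (hM ?_))
    rw [linearSubst_linearForm, hvM, map_zero, map_zero]
  let g : Matrix.GeneralLinearGroup σ k := (Matrix.GeneralLinearGroup.mkOfDetNeZero M hdet)⁻¹
  have hg (f : MvPolynomial σ k) : g • f = linearSubst M f := by
    rw [gl_smul_def, inv_inv]
    rfl
  refine ⟨g, mem_normalizer_of_forall_smul_mem_iff fun f ↦ ⟨fun hf ↦ ?_, fun hf ↦ ?_⟩, fun a ↦ ?_⟩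
  · obtain ⟨a, ha⟩ := ψ.surjective ⟨g • f, hf⟩
    have hfa : linearSubst M a = linearSubst M f := by rw [← hψM, ha]; exact hg f
    exact hM hfa ▸ a.2
  · rw [hg, ← hψM ⟨f, hf⟩]
    exact (ψ ⟨f, hf⟩).2
  · rw [hg, hψM]

end GradedAutomorphism

section ConstantBracket

open Matrix

variable {k σ : Type*} [CommRing k] [Fintype σ]

/-- The biderivation `(f, h) ↦ ∑ a, ∑ b, P a b • (∂_a f * ∂_b h)` with constant coefficients, as the
derivation in `h`. For `P` skew-symmetric this is a constant Poisson bracket. -/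
noncomputable def constBracket (P : Matrix σ σ k) (f : MvPolynomial σ k) :
    Derivation k (MvPolynomial σ k) (MvPolynomial σ k) :=
  mkDerivation k fun b ↦ ∑ a, P a b • pderiv a f

theorem constBracket_apply (P : Matrix σ σ k) (f h : MvPolynomial σ k) :
    constBracket P f h = ∑ a, ∑ b, P a b • (pderiv a f * pderiv b h) := by
  rw [← AlgHom.id_apply (R := k) h, derivation_algHom_apply, Finset.sum_comm]
  simp [constBracket, mkDerivation_X, Finset.mul_sum, mul_comm]

theorem constBracket_transpose (P : Matrix σ σ k) (f h : MvPolynomial σ k) :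
    constBracket Pᵀ f h = constBracket P h f := by
  simp only [constBracket_apply, transpose_apply, mul_comm (pderiv _ f)]
  exact Finset.sum_comm

theorem constBracket_linearForm (P : Matrix σ σ k) (v w : σ → k) :
    constBracket P (linearForm v) (linearForm w) = C (v ᵥ* P ⬝ᵥ w) := by
  simp only [constBracket_apply, pderiv_linearForm, smul_eq_C_mul, ← C_mul, ← map_sum, dotProduct,
    vecMul, Finset.sum_mul]
  rw [Finset.sum_comm]
  exact congrArg C (Finset.sum_congr rfl fun a _ ↦ Finset.sum_congr rfl fun b _ ↦ by ring)

theorem constBracket_algHom_apply (P : Matrix σ σ k)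
    (φ : MvPolynomial σ k →ₐ[k] MvPolynomial σ k) (f h : MvPolynomial σ k) :
    constBracket P (φ f) (φ h) =
      ∑ a, ∑ b, φ (pderiv a f * pderiv b h) * constBracket P (φ (X a)) (φ (X b)) := by
  rw [← constBracket_transpose, derivation_algHom_apply]
  refine Finset.sum_congr rfl fun a _ ↦ ?_
  rw [constBracket_transpose, derivation_algHom_apply, Finset.smul_sum]
  exact Finset.sum_congr rfl fun b _ ↦ by rw [map_mul, smul_smul, smul_eq_mul]

theorem constBracket_linearSubst (P M : Matrix σ σ k) (f h : MvPolynomial σ k) :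
    constBracket P (linearSubst M f) (linearSubst M h) =
      linearSubst M (constBracket (M * P * Mᵀ) f h) := by
  rw [constBracket_algHom_apply, constBracket_apply, map_sum]
  refine Finset.sum_congr rfl fun a _ ↦ ?_
  rw [map_sum]
  refine Finset.sum_congr rfl fun b _ ↦ ?_
  rw [linearSubst_X, linearSubst_X, constBracket_linearForm, map_smul, smul_eq_C_mul, mul_comm]
  rfl

theorem constBracket_X_X (P : Matrix σ σ k) (a b : σ) :
    constBracket P (X a) (X b) = C (P a b) := by
  classical
  rw [← linearForm_single, ← linearForm_single, constBracket_linearForm]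
  simp

variable [DecidableEq σ]

theorem smul_constBracket (g : GeneralLinearGroup σ k) (P : Matrix σ σ k) (f h : MvPolynomial σ k) :
    g • constBracket P f h =
      constBracket ((g : Matrix σ σ k) * P * (g : Matrix σ σ k)ᵀ) (g • f) (g • h) := by
  have hg : ((g⁻¹ : GeneralLinearGroup σ k) : Matrix σ σ k) * (g * P * (g : Matrix σ σ k)ᵀ) *
      ((g⁻¹ : GeneralLinearGroup σ k) : Matrix σ σ k)ᵀ = P := by
    rw [mul_assoc (g : Matrix σ σ k), Units.inv_mul_cancel_left, mul_assoc, ← transpose_mul,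
      Units.inv_mul, transpose_one, mul_one]
  simp only [gl_smul_def, constBracket_linearSubst, hg]

theorem constBracket_mem_invariantSubalgebra {Γ : Subgroup (GeneralLinearGroup σ k)}
    {P : Matrix σ σ k} (hP : ∀ γ ∈ Γ, (γ : Matrix σ σ k) * P * (γ : Matrix σ σ k)ᵀ = P)
    {f h : MvPolynomial σ k} (hf : f ∈ invariantSubalgebra Γ) (hh : h ∈ invariantSubalgebra Γ) :
    constBracket P f h ∈ invariantSubalgebra Γ := by
  rw [mem_invariantSubalgebra_iff] at hf hh ⊢
  exact fun γ hγ ↦ by rw [smul_constBracket, hP γ hγ, hf γ hγ, hh γ hγ]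

theorem eq_of_constBracket_eq_on_invariants [IsDomain k] [CharZero k]
    {Γ : Subgroup (GeneralLinearGroup σ k)} [Finite Γ] {P Q : Matrix σ σ k}
    (hPQ : ∀ f ∈ invariantSubalgebra Γ, ∀ h ∈ invariantSubalgebra Γ,
      constBracket P f h = constBracket Q f h) : P = Q := by
  have hleft {f : MvPolynomial σ k} (hf : f ∈ invariantSubalgebra Γ) :
      constBracket P f = constBracket Q f :=
    derivation_ext_of_isAlgebraic (R := invariantSubalgebra Γ) fun h ↦ hPQ f hf h h.2
  have htranspose (h : MvPolynomial σ k) : constBracket Pᵀ h = constBracket Qᵀ h :=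
    derivation_ext_of_isAlgebraic (R := invariantSubalgebra Γ) fun f ↦ by
      rw [constBracket_transpose, constBracket_transpose]
      exact DFunLike.congr_fun (hleft f.2) h
  refine transpose_injective (Matrix.ext fun a b ↦ C_injective σ k ?_)
  rw [← constBracket_X_X, ← constBracket_X_X, htranspose]

end ConstantBracket

section Symplectic

open Matrix

theorem mul_neg_J_mul_transpose_eq_iff {l R : Type*} [DecidableEq l] [Fintype l] [CommRing R]
    {A : Matrix (l ⊕ l) (l ⊕ l) R} : A * -J l R * Aᵀ = -J l R ↔ A ∈ symplecticGroup l R := by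
  rw [mul_neg, neg_mul, neg_inj, SymplecticGroup.mem_iff]

theorem pbracket_eq_constBracket {n : ℕ} (f h : Pn n) :
    pbracket n f h = constBracket (-J (Fin n) ℂ) f h := by
  simp only [pbracket, constBracket_apply, J, Fintype.sum_sum_type, Matrix.neg_apply,
    fromBlocks_apply₁₁, fromBlocks_apply₁₂, fromBlocks_apply₂₁, fromBlocks_apply₂₂]
  simp [Matrix.one_apply, sub_eq_add_neg, Finset.sum_add_distrib]

end Symplectic

theorem graded_poisson_automorphisms_of_invariants_general {k σ : Type*} [Field k] [CharZero k]
    [IsAlgClosed k] [Fintype σ] [DecidableEq σ] (Γ : Subgroup (Matrix.GeneralLinearGroup σ k))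
    [Finite Γ] (hΓ : HasNoPseudoreflection Γ) (P : Matrix σ σ k)
    (hP : ∀ γ ∈ Γ, (γ : Matrix σ σ k) * P * (γ : Matrix σ σ k).transpose = P) :
    (∀ g ∈ Subgroup.normalizer (Γ : Set (Matrix.GeneralLinearGroup σ k)),
      ∀ f ∈ invariantSubalgebra Γ, g • f ∈ invariantSubalgebra Γ) ∧
    (∀ g : Matrix.GeneralLinearGroup σ k, (∀ f ∈ invariantSubalgebra Γ, g • f = f) ↔ g ∈ Γ) ∧
    (∀ ψ : invariantSubalgebra Γ ≃ₐ[k] invariantSubalgebra Γ,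
      (∀ (i : ℕ) (f : invariantSubalgebra Γ), (f : MvPolynomial σ k).IsHomogeneous i →
        (ψ f : MvPolynomial σ k).IsHomogeneous i) →
      (∀ f h b : invariantSubalgebra Γ, (b : MvPolynomial σ k) = constBracket P f h →
        (ψ b : MvPolynomial σ k) = constBracket P (ψ f) (ψ h)) →
      ∃ g ∈ Subgroup.normalizer (Γ : Set (Matrix.GeneralLinearGroup σ k)),
        (g : Matrix σ σ k) * P * (g : Matrix σ σ k).transpose = P ∧
        ∀ f : invariantSubalgebra Γ, (ψ f : MvPolynomial σ k) = g • (f : MvPolynomial σ k)) := by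
  refine ⟨fun g hg f hf ↦ smul_mem_invariantSubalgebra_of_mem_normalizer hg hf,
    fun g ↦ ⟨mem_of_forall_smul_eq_self, fun hg f hf ↦ mem_invariantSubalgebra_iff.mp hf g hg⟩,
    fun ψ hgraded hbracket ↦ ?_⟩
  obtain ⟨g, hg, hψ⟩ := exists_gl_smul_eq_of_graded hΓ ψ hgraded
  refine ⟨g, hg, eq_of_constBracket_eq_on_invariants (Γ := Γ) fun f hf h hh ↦ ?_, hψ⟩
  obtain ⟨a, ha⟩ := ψ.surjective ⟨f, hf⟩
  obtain ⟨b, hb⟩ := ψ.surjective ⟨h, hh⟩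
  have hab := hbracket a b ⟨_, constBracket_mem_invariantSubalgebra hP a.2 b.2⟩ rfl
  rwa [hψ, smul_constBracket, ← hψ, ← hψ, ha, hb] at hab

/-- for a finite subgroup `Γ ⊆ Sp(V)`, the assignment `g ↦ (f ↦ f ∘ g⁻¹)`
maps the normalizer `N_{Sp(V)}(Γ)` to graded Poisson automorphisms of `ℂ[V]^Γ`;
this map is surjective onto the group of all automorphisms of `ℂ[V]^Γ` preserving the
grading and the Poisson bracket, and its kernel is exactly `Γ`.  Consequently the graded
Poisson automorphism group of `ℂ[V]^Γ` is `N_{Sp(V)}(Γ)/Γ`. -/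
theorem graded_poisson_automorphisms_of_invariants
    (n : ℕ) (Γ : Subgroup (GLn n)) (hfin : Finite Γ)
    (hsp : ∀ γ ∈ Γ, ((γ : GLn n) : Mn n) ∈ Matrix.symplecticGroup (Fin n) ℂ) :
    -- well-definedness: any `g ∈ N_{Sp(V)}(Γ)` maps `ℂ[V]^Γ` into itself via `f ↦ f ∘ g⁻¹`
    (∀ g : GLn n, g ∈ Subgroup.normalizer Γ →
      ((g : Mn n) ∈ Matrix.symplecticGroup (Fin n) ℂ) →
      ∀ f ∈ invariants n Γ, substG n (((g⁻¹ : GLn n)) : Mn n) f ∈ invariants n Γ) ∧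
    -- kernel: `g` acts as the identity on `ℂ[V]^Γ` if and only if `g ∈ Γ`
    (∀ g : GLn n, g ∈ Subgroup.normalizer Γ →
      ((g : Mn n) ∈ Matrix.symplecticGroup (Fin n) ℂ) →
      ((∀ f ∈ invariants n Γ, substG n (((g⁻¹ : GLn n)) : Mn n) f = f) ↔ g ∈ Γ)) ∧
    -- surjectivity: every graded Poisson algebra automorphism of `ℂ[V]^Γ` arises this way
    (∀ ψ : invariants n Γ ≃ₐ[ℂ] invariants n Γ,
      (∀ (i : ℕ) (f : invariants n Γ), (f : Pn n).IsHomogeneous i →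
        ((ψ f : invariants n Γ) : Pn n).IsHomogeneous i) →
      (∀ f g b : invariants n Γ, (b : Pn n) = pbracket n (f : Pn n) (g : Pn n) →
        ((ψ b : invariants n Γ) : Pn n)
          = pbracket n ((ψ f : invariants n Γ) : Pn n) ((ψ g : invariants n Γ) : Pn n)) →
      ∃ g : GLn n, g ∈ Subgroup.normalizer Γ ∧
        ((g : Mn n) ∈ Matrix.symplecticGroup (Fin n) ℂ) ∧
        ∀ f : invariants n Γ, ((ψ f : invariants n Γ) : Pn n)
          = substG n (((g⁻¹ : GLn n)) : Mn n) (f : Pn n)) := by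
  obtain ⟨hmap, hker, hsurj⟩ := graded_poisson_automorphisms_of_invariants_general Γ
    (hasNoPseudoreflection_of_forall_det_eq_one fun γ hγ ↦ SymplecticGroup.det_eq_one (hsp γ hγ))
    (-Matrix.J (Fin n) ℂ) fun γ hγ ↦ mul_neg_J_mul_transpose_eq_iff.mpr (hsp γ hγ)
  simp only [pbracket_eq_constBracket, ← mul_neg_J_mul_transpose_eq_iff]
  exact ⟨fun g hg _ ↦ hmap g hg, fun g _ _ ↦ hker g, hsurj⟩
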